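/- arXiv:1606.01013 — 3 statements merged into one kernel-verified Lean document; each statement's English description precedes it below -/
import Mathlib

section
/- If X is a Tychonoff space and C_p(X) is an Ascoli space, then C_p(X) is κ-Fréchet–Urysohn. -/
open Topology Filter

/-- `Cp X` : continuous real-valued functions on `X` with the topology of
pointwise convergence. -/
abbrev Cp (X : Type*) [TopologicalSpace X] : Type _ := {f : X → ℝ // Continuous f}

/-- A space `Y` is Ascoli if every compact subset `K` of `C(Y, ℝ)` (compact-open
topology) is evenly continuous. -/
def IsAscoli (Y : Type*) [TopologicalSpace Y] : Prop :=
  ∀ K : Set C(Y, ℝ), IsCompact K → Continuous fun p : Y × K => (p.2 : C(Y, ℝ)) p.1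

/-- A space is κ-Fréchet–Urysohn if every point in the closure of an open set is
the limit of a sequence from that set. -/
def KappaFrechetUrysohn (Z : Type*) [TopologicalSpace Z] : Prop :=
  ∀ U : Set Z, IsOpen U → ∀ z ∈ closure U,
    ∃ s : ℕ → Z, (∀ n, s n ∈ U) ∧ Filter.Tendsto s Filter.atTop (nhds z)

/-- A neighbourhood in `Cp X` contains all functions agreeing with the centre on a finite set. -/
lemma cp_nhds_finite {X : Type*} [TopologicalSpace X] (f : Cp X) (O : Set (Cp X)) (hO : O ∈ 𝓝 f) :
    ∃ E : Finset X, ∀ g : Cp X, (∀ x ∈ E, g.1 x = f.1 x) → g ∈ O := by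
  rw [nhds_subtype_eq_comap, Filter.mem_comap] at hO
  obtain ⟨t, ht, htO⟩ := hO
  rw [nhds_pi, Filter.mem_pi] at ht
  obtain ⟨I, hI, s, hs, hst⟩ := ht
  refine ⟨hI.toFinset, fun g hg => htO (hst ?_)⟩
  intro x hx
  rw [hg x (hI.mem_toFinset.2 hx)]
  exact mem_of_mem_nhds (hs x)

/-- The set of functions within `ε` of `f` on a finite set is a neighbourhood. -/
lemma cp_nhds_ball {X : Type*} [TopologicalSpace X] (f : Cp X) (S : Finset X) (ε : ℝ) (hε : 0 < ε) :
    {g : Cp X | ∀ x ∈ S, |g.1 x - f.1 x| < ε} ∈ 𝓝 f := by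
  have : ∀ᶠ g : Cp X in 𝓝 f, ∀ x ∈ S, |g.1 x - f.1 x| < ε := by
    rw [Filter.eventually_all_finset]
    intro x _
    have hc : Continuous fun g : Cp X => |g.1 x - f.1 x| := by
      have : Continuous fun g : Cp X => g.1 x := (continuous_apply x).comp continuous_subtype_val
      exact (this.sub continuous_const).abs
    have := hc.tendsto f
    refine this.eventually (gt_mem_nhds ?_)
    simpa using hε
  exact this

lemma cp_separate {X : Type*} [TopologicalSpace X] [T35Space X] (E F : Finset X)
    (h : Disjoint E F) (c : ℝ) (hc : 0 ≤ c) :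
    ∃ f : Cp X, (∀ x ∈ E, f.1 x = 0) ∧ ∀ x ∈ F, c ≤ f.1 x := by
  have key : ∀ p : X, ∃ f : X → ℝ, Continuous f ∧ (∀ x, 0 ≤ f x) ∧
      (p ∈ F → (∀ x ∈ E, f x = 0) ∧ f p = 1) := by
    intro p
    by_cases hp : p ∈ F
    · have hpE : p ∉ (E : Set X) := fun h' => (Finset.disjoint_left.1 h) h' hp
      obtain ⟨f, hf, hf0, hf1⟩ := CompletelyRegularSpace.completely_regular p (E : Set X)
        E.finite_toSet.isClosed hpE
      refine ⟨fun x => 1 - (f x : ℝ), by fun_prop, fun x => by linarith [(f x).2.2], fun _ => ⟨?_, ?_⟩⟩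
      · intro x hx
        have := hf1 hx
        simp [this]
      · simp [hf0]
    · exact ⟨fun _ => 0, continuous_const, fun _ => le_rfl, fun h => absurd h hp⟩
  choose f hf hf0 hfp using key
  refine ⟨⟨fun x => c * ∑ p ∈ F, f p x, by fun_prop⟩, ?_, ?_⟩
  · intro x hx
    have : ∑ p ∈ F, f p x = 0 := Finset.sum_eq_zero fun p hp => (hfp p hp).1 x hx
    simp [this]
  · intro x hx
    have h1 : f x x ≤ ∑ p ∈ F, f p x :=
      Finset.single_le_sum (f := fun p => f p x) (fun p _ => hf0 p x) hx
    rw [(hfp x hx).2] at h1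
    simpa using mul_le_mul_of_nonneg_left h1 hc

/-- The truncation to `[0,1]`. -/
noncomputable def clamp01 (t : ℝ) : ℝ := max 0 (min t 1)

lemma clamp01_continuous : Continuous clamp01 := by unfold clamp01; fun_prop

lemma clamp01_zero {t : ℝ} (h : t ≤ 0) : clamp01 t = 0 := by
  unfold clamp01; exact max_eq_left ((min_le_left _ _).trans h)

lemma clamp01_one {t : ℝ} (h : 1 ≤ t) : clamp01 t = 1 := by
  unfold clamp01; rw [min_eq_right h]; simp

/-- The test functions on `Cp X`. -/
noncomputable def testFun {X : Type*} [TopologicalSpace X] (F : ℕ → Finset X) (n : ℕ) :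
    C(Cp X, ℝ) where
  toFun f := ∏ x ∈ F n, clamp01 (f.1 x - n)
  continuous_toFun := by
    refine continuous_finsetProd _ fun x _ => clamp01_continuous.comp ?_
    have : Continuous fun g : Cp X => g.1 x := (continuous_apply x).comp continuous_subtype_val
    exact this.sub continuous_const

lemma exists_compact {X : Type*} [TopologicalSpace X] [T35Space X] (hA : IsAscoli (Cp X))
    (F : ℕ → Finset X) (hF : ∀ x, ∀ᶠ n in atTop, x ∉ F n) :
    ∃ K : Set (Cp X), IsCompact K ∧ ∃ᶠ n in atTop, ∃ g ∈ K, ∀ x ∈ F n, (n : ℝ) < g.1 x := by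
  by_contra! hcon
  have hlim : Tendsto (testFun F) atTop (𝓝 0) := by
    rw [ContinuousMap.tendsto_iff_forall_isCompact_tendstoUniformlyOn]
    intro K hK ε hε
    have h1 := hcon K hK
    filter_upwards [h1] with n hn
    intro g hg
    have : testFun F n g = 0 := by
      obtain ⟨x, hx, hxn⟩ := hn g hg
      exact Finset.prod_eq_zero hx (clamp01_zero (by linarith))
    rw [this]
    exact refl_mem_uniformity hε
  have hK := hlim.isCompact_insert_range
  have hc := hA _ hK
  set K : Set C(Cp X, ℝ) := insert 0 (Set.range (testFun F)) with hKdef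
  let z : Cp X := ⟨fun _ => 0, continuous_const⟩
  let k0 : K := ⟨0, Set.mem_insert _ _⟩
  let k : ℕ → K := fun n => ⟨testFun F n, Set.mem_insert_of_mem _ ⟨n, rfl⟩⟩
  have hk : Tendsto k atTop (𝓝 k0) := by
    rw [tendsto_subtype_rng]; exact hlim
  have h0 := hc.tendsto (z, k0)
  have h1 : ∀ᶠ p : Cp X × K in 𝓝 (z, k0), (p.2 : C(Cp X, ℝ)) p.1 < 1 := by
    refine h0.eventually (gt_mem_nhds ?_)
    simp [k0]
  rw [nhds_prod_eq] at h1
  obtain ⟨P, hP, Q, hQ, hPQ⟩ := Filter.eventually_prod_iff.1 h1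
  obtain ⟨E, hE⟩ := cp_nhds_finite z {f | P f} hP
  have h2 : ∀ᶠ n in atTop, ∀ x ∈ E, x ∉ F n := by
    rw [Filter.eventually_all_finset]; exact fun x _ => hF x
  obtain ⟨n, hn1, hn2⟩ := ((hk.eventually hQ).and h2).exists
  obtain ⟨f, hf0, hf1⟩ := cp_separate E (F n) (Finset.disjoint_left.2 hn2) (n + 1) (by positivity)
  have h3 : testFun F n f < 1 := hPQ (hE f hf0) hn1
  have h4 : testFun F n f = 1 := Finset.prod_eq_one fun x hx => clamp01_one (by linarith [hf1 x hx])
  linarith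

theorem stmt2 {X : Type*} [TopologicalSpace X] [T35Space X]
    (hAscoli : IsAscoli (Cp X)) : KappaFrechetUrysohn (Cp X) := by
  classical
  intro U hU z hz
  have step : ∀ (S : Finset X) (n : ℕ), ∃ (f : Cp X) (E : Finset X),
      (∀ x ∈ S, |f.1 x - z.1 x| < 1 / ((n : ℝ) + 1)) ∧
      ∀ g : Cp X, (∀ x ∈ E, g.1 x = f.1 x) → g ∈ U := by
    intro S n
    obtain ⟨f, hf, hfU⟩ := mem_closure_iff_nhds.1 hz _
      (cp_nhds_ball z S (1 / ((n : ℝ) + 1)) (by positivity))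
    obtain ⟨E, hE⟩ := cp_nhds_finite f U (hU.mem_nhds hfU)
    exact ⟨f, E, hf, hE⟩
  choose f E hf hE using step
  let S : ℕ → Finset X := fun n => Nat.rec ∅ (fun n S => S ∪ E S n) n
  have hS : ∀ n, S (n + 1) = S n ∪ E (S n) n := fun n => rfl
  have hmono : Monotone S := monotone_nat_of_le_succ fun n => by
    rw [hS]; exact Finset.subset_union_left
  let F : ℕ → Finset X := fun n => E (S n) n \ S n
  have hF : ∀ x, ∀ᶠ n in atTop, x ∉ F n := by
    intro x
    by_cases h : ∃ m, x ∈ F m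
    · obtain ⟨m, hm⟩ := h
      filter_upwards [eventually_ge_atTop (m + 1)] with n hn hxn
      have h1 : x ∈ S (m + 1) := by
        rw [hS]; exact Finset.mem_union_right _ (Finset.mem_sdiff.1 hm).1
      exact (Finset.mem_sdiff.1 hxn).2 (hmono hn h1)
    · push Not at h
      exact Filter.Eventually.of_forall h
  obtain ⟨K, hK, hfreq⟩ := exists_compact hAscoli F hF
  obtain ⟨φ, hφ, hφK⟩ := Filter.extraction_of_frequently_atTop hfreq
  choose g hgK hg using hφK
  have hbound : ∀ x, ∃ C : ℝ, ∀ n, (g n).1 x ≤ C := by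
    intro x
    have hc : Continuous fun g : Cp X => g.1 x := (continuous_apply x).comp continuous_subtype_val
    obtain ⟨C, hC⟩ := (hK.image hc).bddAbove
    exact ⟨C, fun n => hC ⟨g n, hgK n, rfl⟩⟩
  let d : ℕ → X → ℝ := fun n x => (f (S (φ n)) (φ n)).1 x - z.1 x
  let e : ℕ → ℝ := fun n => 1 / ((φ n : ℝ) + 1)
  have he : ∀ n, 0 < e n := fun n => by positivity
  let t : ℕ → X → ℝ := fun n x => max (-e n) (min (d n x) (e n))
  let c : ℕ → X → ℝ := fun n x => clamp01 ((g n).1 x - φ n + 1)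
  have hd : ∀ n, Continuous (d n) := fun n => (f (S (φ n)) (φ n)).2.sub z.2
  have ht : ∀ n, Continuous (t n) := fun n => by
    have := hd n
    fun_prop
  have hcc : ∀ n, Continuous (c n) := fun n => clamp01_continuous.comp (by
    have := (g n).2
    fun_prop)
  refine ⟨fun n => ⟨fun x => z.1 x + t n x + c n x * (d n x - t n x), 
    (z.2.add (ht n)).add ((hcc n).mul ((hd n).sub (ht n)))⟩, ?_, ?_⟩
  · intro n
    apply hE (S (φ n)) (φ n)
    intro x hx
    change z.1 x + t n x + c n x * (d n x - t n x) = _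
    have hdx : (f (S (φ n)) (φ n)).1 x = z.1 x + d n x := by simp [d]
    rw [hdx]
    rcases Classical.em (x ∈ S (φ n)) with hxS | hxS
    · have h1 : |d n x| < e n := hf _ _ x hxS
      rw [abs_lt] at h1
      have : t n x = d n x := by
        change max (-e n) (min (d n x) (e n)) = d n x
        rw [min_eq_left h1.2.le, max_eq_right h1.1.le]
      rw [this]; ring
    · have h1 := hg n x (Finset.mem_sdiff.2 ⟨hx, hxS⟩)
      have : c n x = 1 := clamp01_one (by linarith)
      rw [this]; ring
  · rw [tendsto_subtype_rng, tendsto_pi_nhds]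
    intro x
    change Tendsto (fun n => z.1 x + t n x + c n x * (d n x - t n x)) atTop (𝓝 (z.1 x))
    have hφt : Tendsto (fun n => (φ n : ℝ)) atTop atTop :=
      tendsto_natCast_atTop_atTop.comp hφ.tendsto_atTop
    have het : Tendsto e atTop (𝓝 0) := 
      (tendsto_one_div_add_atTop_nhds_zero_nat (𝕜 := ℝ)).comp hφ.tendsto_atTop
    have htt : Tendsto (fun n => t n x) atTop (𝓝 0) := by
      refine tendsto_of_tendsto_of_tendsto_of_le_of_le (by simpa using het.neg) het
        (fun n => le_max_left _ _) (fun n => max_le (by linarith [he n]) (min_le_right _ _))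
    obtain ⟨C, hC⟩ := hbound x
    have h1 : Tendsto (fun n => z.1 x + t n x) atTop (𝓝 (z.1 x)) := by
      simpa using htt.const_add (z.1 x)
    refine h1.congr' ?_
    filter_upwards [hφt.eventually_ge_atTop (C + 1)] with n hn
    have : c n x = 0 := clamp01_zero (by linarith [hC n])
    rw [this]; ring
end

section
/- A completely metrizable space X is scattered if and only if C_p(X) is an Ascoli space. -/
open Topology Filter

def IsScattered (X : Type*) [TopologicalSpace X] : Prop :=
  ∀ A : Set X, A.Nonempty → ∃ a ∈ A, ∃ U : Set X, IsOpen U ∧ U ∩ A = {a}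

/-- `X` is completely metrizable: its topology is induced by some complete metric. -/
def CompletelyMetrizable (X : Type*) [t : TopologicalSpace X] : Prop :=
  ∃ m : MetricSpace X, m.toUniformSpace.toTopologicalSpace = t ∧
    @CompleteSpace X m.toUniformSpace

theorem scattered_countable_closure {X : Type*} [MetricSpace X] (hs : IsScattered X)
    {D : Set X} (hD : D.Countable) : (closure D).Countable := by
  have hsep : TopologicalSpace.IsSeparable (closure D) := hD.isSeparable.closure
  have := hsep.secondCountableTopology
  by_contra hc
  have hc' : ¬ (Set.univ : Set (closure D)).Countable := by
    intro h
    apply hc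
    have h2 := h.image (Subtype.val)
    simpa using h2
  obtain ⟨C, hC, ⟨c, hcC⟩, -⟩ :=
    exists_perfect_nonempty_of_isClosed_of_not_countable isClosed_univ hc'
  obtain ⟨a, ⟨a', ha', rfl⟩, U, hU, hUA⟩ := hs (Subtype.val '' C) ⟨c, c, hcC, rfl⟩
  have hacc := hC.acc a' ha'
  rw [accPt_iff_nhds] at hacc
  have haU : (a' : X) ∈ U := by
    have : (a' : X) ∈ U ∩ (Subtype.val '' C) := by rw [hUA]; rfl
    exact this.1
  obtain ⟨y, ⟨hyU, hyC⟩, hne⟩ := hacc (Subtype.val ⁻¹' U)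
    ((hU.preimage continuous_subtype_val).mem_nhds haU)
  have : (y : X) ∈ U ∩ (Subtype.val '' C) := ⟨hyU, y, hyC, rfl⟩
  rw [hUA] at this
  exact hne (Subtype.ext this)

theorem Cp_step {X : Type*} [TopologicalSpace X] {U : Set (Cp X)} (hU : IsOpen U)
    {z : Cp X} (hz : z ∈ closure U) (F : Finset X) (n : ℕ) :
    ∃ (f : Cp X) (H : Finset X), F ⊆ H ∧ (∀ x ∈ F, |f.1 x - z.1 x| < 1 / ((n : ℝ) + 1)) ∧
      ∀ g : Cp X, (∀ x ∈ H, g.1 x = f.1 x) → g ∈ U := by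
  classical
  have hn : (0 : ℝ) < 1 / ((n : ℝ) + 1) := by positivity
  have hW : {f : Cp X | ∀ x ∈ F, |f.1 x - z.1 x| < 1 / ((n : ℝ) + 1)} ∈ 𝓝 z := by
    have : ∀ x ∈ F, ∀ᶠ f : Cp X in 𝓝 z, |f.1 x - z.1 x| < 1 / ((n : ℝ) + 1) := by
      intro x hx
      have hc : Continuous fun f : Cp X => |f.1 x - z.1 x| := by
        have : Continuous fun f : Cp X => f.1 x :=
          (continuous_apply x).comp continuous_subtype_val
        exact (this.sub continuous_const).abs
      apply hc.continuousAt.eventually_lt continuousAt_const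
      simpa using hn
    exact (Filter.eventually_all_finset F).2 this
  obtain ⟨f, hf, hfU⟩ := mem_closure_iff_nhds.1 hz _ hW
  have h1 : U ∈ 𝓝 f := hU.mem_nhds hfU
  rw [nhds_induced, Filter.mem_comap] at h1
  obtain ⟨t, ht, htU⟩ := h1
  rw [nhds_pi, Filter.mem_pi'] at ht
  obtain ⟨I, s, hs, hI⟩ := ht
  refine ⟨f, F ∪ I, Finset.subset_union_left, hf, fun g hg => htU (hI ?_)⟩
  intro x hx
  rw [hg x (Finset.mem_union_right _ hx)]
  exact mem_of_mem_nhds (hs x)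

theorem Cp_kfu {X : Type*} [MetricSpace X] (hs : IsScattered X)
    {U : Set (Cp X)} (hU : IsOpen U) {z : Cp X} (hz : z ∈ closure U) :
    ∃ y : ℕ → Cp X, (∀ n, y n ∈ U) ∧ Tendsto y atTop (𝓝 z) := by
  classical
  choose f H hFH hf hHU using Cp_step hU hz
  let F : ℕ → Finset X := fun n => Nat.rec (motive := fun _ => Finset X) ∅ (fun n F => H F n) n
  have hFs : ∀ n, F (n + 1) = H (F n) n := fun n => rfl
  have hmono : Monotone F := monotone_nat_of_le_succ fun n => hFH (F n) n
  let D : Set X := ⋃ n : ℕ, {x | x ∈ F n}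
  have hD : D.Countable := Set.countable_iUnion fun n => (F n).countable_toSet
  let P := closure D
  have hP : P.Countable := scattered_countable_closure hs hD
  obtain ⟨e, he⟩ := Set.countable_iff_exists_injOn.1 hP
  let E : ℕ → Set X := fun n => (F (n + 1) : Set X) \ (F n : Set X)
  have hEfin : ∀ n, (E n).Finite := fun n => (F (n + 1)).finite_toSet.subset Set.sdiff_subset
  let B : ℕ → Set X := fun n => {x | x ∈ P ∧ e x ≤ n ∧ x ∉ E n}
  have hBfin : ∀ n, (B n).Finite := by
    intro n
    apply Set.Finite.of_finite_image ((Set.finite_Iic n).subset _)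
      (he.mono fun x hx => hx.1)
    rintro _ ⟨x, hx, rfl⟩
    exact hx.2.1
  let V : ℕ → Set X := fun n => Metric.thickening (1 / ((n : ℝ) + 1)) P \ B n
  have hV : ∀ n, IsOpen (V n) := fun n =>
    Metric.isOpen_thickening.sdiff (hBfin n).isClosed
  have hEV : ∀ n, E n ⊆ V n := by
    intro n x hx
    refine ⟨?_, fun h => h.2.2 hx⟩
    apply Metric.self_subset_thickening (by positivity)
    exact subset_closure (Set.mem_iUnion.2 ⟨n + 1, hx.1⟩)
  have hb : ∀ n, ∃ b : C(X, ℝ), Set.EqOn b 0 (V n)ᶜ ∧ Set.EqOn b 1 (E n) ∧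
      ∀ x, b x ∈ Set.Icc (0 : ℝ) 1 := fun n =>
    exists_continuous_zero_one_of_isClosed (hV n).isClosed_compl (hEfin n).isClosed
      (Set.disjoint_left.2 fun x hx hx' => hx (hEV n hx'))
  choose b hb0 hb1 _ using hb
  let c : ℕ → ℝ → ℝ := fun n t => max (-(1 / ((n : ℝ) + 1))) (min (1 / ((n : ℝ) + 1)) t)
  have hc : ∀ n, Continuous (c n) := fun n => by fun_prop
  have hcabs : ∀ (n : ℕ) (t : ℝ), |c n t| ≤ 1 / ((n : ℝ) + 1) := by
    intro n t
    have hn : (0 : ℝ) < 1 / ((n : ℝ) + 1) := by positivity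
    rw [abs_le]
    exact ⟨le_max_left _ _, max_le (by linarith) (min_le_left _ _)⟩
  have hceq : ∀ (n : ℕ) (t : ℝ), |t| < 1 / ((n : ℝ) + 1) → c n t = t := by
    intro n t ht
    rw [abs_lt] at ht
    simp only [c]
    rw [min_eq_right ht.2.le, max_eq_right ht.1.le]
  let g : ℕ → X → ℝ := fun n x => z.1 x + c n ((f (F n) n).1 x - z.1 x) +
    b n x * (((f (F n) n).1 x - z.1 x) - c n ((f (F n) n).1 x - z.1 x))
  have hg : ∀ n, Continuous (g n) := by
    intro n
    have h1 := z.2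
    have h2 := (f (F n) n).2
    have h3 := hc n
    have h4 := (b n).continuous
    have h5 : Continuous fun x => (f (F n) n).1 x - z.1 x := h2.sub h1
    exact (h1.add (h3.comp h5)).add (h4.mul (h5.sub (h3.comp h5)))
  refine ⟨fun n => ⟨g n, hg n⟩, fun n => ?_, ?_⟩
  · apply hHU (F n) n
    intro x hx
    change g n x = _
    by_cases hxF : x ∈ F n
    · simp only [g]
      rw [hceq n _ (hf (F n) n x hxF)]
      ring
    · have : x ∈ E n := ⟨hx, hxF⟩
      simp only [g]
      rw [hb1 n this]
      simp
  · rw [tendsto_subtype_rng, tendsto_pi_nhds]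
    intro x
    have hev : ∀ᶠ n in atTop, x ∉ V n := by
      by_cases hxP : x ∈ P
      · by_cases hxD : ∃ N, x ∈ F N
        · obtain ⟨N, hN⟩ := hxD
          filter_upwards [eventually_ge_atTop N, eventually_ge_atTop (e x)] with n h1 h2 hx
          exact hx.2 ⟨hxP, h2, fun hE => hE.2 (hmono h1 hN)⟩
        · filter_upwards [eventually_ge_atTop (e x)] with n h2 hx
          exact hx.2 ⟨hxP, h2, fun hE => hxD ⟨n + 1, hE.1⟩⟩
      · obtain ⟨δ, hδ, hball⟩ := Metric.isOpen_iff.1 (isClosed_closure.isOpen_compl) x hxP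
        have := (tendsto_one_div_add_atTop_nhds_zero_nat (𝕜 := ℝ)).eventually_lt_const hδ
        filter_upwards [this] with n hn hx
        obtain ⟨y, hy, hxy⟩ := Metric.mem_thickening_iff.1 hx.1
        refine hball (a := y) ?_ hy
        rw [Metric.mem_ball, dist_comm]
        exact hxy.trans hn
    rw [tendsto_iff_dist_tendsto_zero]
    apply squeeze_zero' (Eventually.of_forall fun _ => dist_nonneg) _
      (tendsto_one_div_add_atTop_nhds_zero_nat (𝕜 := ℝ))
    filter_upwards [hev] with n hn
    have h0 : b n x = 0 := hb0 n hn
    change dist (g n x) (z.1 x) ≤ _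
    rw [Real.dist_eq]
    simp only [g, h0]
    convert hcabs n ((f (F n) n).1 x - z.1 x) using 2
    ring

theorem ascoli_of_kfu {Y : Type*} [TopologicalSpace Y]
    (h : ∀ U : Set Y, IsOpen U → ∀ z ∈ closure U,
      ∃ y : ℕ → Y, (∀ n, y n ∈ U) ∧ Tendsto y atTop (𝓝 z)) : IsAscoli Y := by
  intro K hK
  have key : ∀ z : Y, ∀ ε > 0, ∀ᶠ y in 𝓝 z, ∀ f ∈ K, |f y - f z| ≤ ε := by
    intro z ε hε
    by_contra hcon
    let U : Set Y := ⋃ f ∈ K, {y | ε < |f y - f z|}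
    have hU : IsOpen U := by
      refine isOpen_biUnion fun f _ => isOpen_lt continuous_const ?_
      have := f.continuous
      fun_prop
    have hzU : z ∈ closure U := by
      rw [mem_closure_iff_frequently]
      refine (Filter.not_eventually.1 hcon).mono fun y hy => ?_
      push Not at hy
      obtain ⟨f, hf, hfy⟩ := hy
      exact Set.mem_iUnion₂.2 ⟨f, hf, hfy⟩
    obtain ⟨y, hyU, hy⟩ := h U hU z hzU
    have hyU' : ∀ n, ∃ f ∈ K, ε < |f (y n) - f z| := by
      intro n
      obtain ⟨f, hf, hfy⟩ := Set.mem_iUnion₂.1 (hyU n)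
      exact ⟨f, hf, hfy⟩
    choose f hfK hfy using hyU'
    obtain ⟨f0, -, hcl⟩ := hK.exists_mapClusterPt (f := atTop) (u := f)
      (by rw [le_principal_iff, mem_map]; exact Eventually.of_forall hfK)
    have h1 : ∀ᶠ n in atTop, f0 (y n) ∈ Metric.ball (f0 z) (ε / 2) :=
      (f0.continuous.tendsto z |>.comp hy) (Metric.ball_mem_nhds _ (by positivity))
    obtain ⟨N, hN⟩ := eventually_atTop.1 h1
    have hyN : Tendsto (fun n => y (n + N)) atTop (𝓝 z) := hy.comp (tendsto_add_atTop_nat N)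
    have hS := hyN.isCompact_insert_range
    have hopen := ContinuousMap.isOpen_setOfPred_mapsTo (X := Y) (Y := ℝ) hS
      (Metric.isOpen_ball (x := f0 z) (ε := ε / 2))
    have hmem : {g : C(Y, ℝ) | Set.MapsTo g (insert z (Set.range fun n => y (n + N)))
        (Metric.ball (f0 z) (ε / 2))} ∈ 𝓝 f0 := by
      apply hopen.mem_nhds
      rintro x (rfl | ⟨n, rfl⟩)
      · exact Metric.mem_ball_self (by positivity)
      · exact hN _ (by omega)
    have hfr := (mapClusterPt_iff_frequently.1 hcl) _ hmem
    obtain ⟨n, hn, hnN⟩ := (hfr.and_eventually (eventually_ge_atTop N)).exists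
    have ha : f n z ∈ Metric.ball (f0 z) (ε / 2) := hn (Set.mem_insert _ _)
    have hb : f n (y n) ∈ Metric.ball (f0 z) (ε / 2) :=
      hn (Set.mem_insert_of_mem _ ⟨n - N, by simp [Nat.sub_add_cancel hnN]⟩)
    rw [Metric.mem_ball, Real.dist_eq, abs_lt] at ha hb
    have := hfy n
    rw [lt_abs] at this
    rcases this with h | h <;> linarith
  rw [continuous_iff_continuousAt]
  rintro ⟨z, f0⟩
  rw [Metric.continuousAt_iff']
  intro ε hε
  have h1 := key z (ε / 3) (by positivity)
  have hc : Continuous fun f : K => (f : C(Y, ℝ)) z :=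
    (continuous_eval_const z).comp continuous_subtype_val
  have h2 : ∀ᶠ f : K in 𝓝 f0, dist ((f : C(Y, ℝ)) z) ((f0 : C(Y, ℝ)) z) < ε / 3 :=
    Metric.continuousAt_iff'.1 hc.continuousAt _ (by positivity)
  rw [nhds_prod_eq]
  filter_upwards [h1.prod_mk h2] with p hp
  have := hp.1 p.2 p.2.2
  rw [← Real.dist_eq] at this
  have ht := dist_triangle ((p.2 : C(Y, ℝ)) p.1) ((p.2 : C(Y, ℝ)) z) ((f0 : C(Y, ℝ)) z)
  have h3 := hp.2
  linarith

theorem not_ascoli_of_family {Y ι : Type*} [TopologicalSpace Y] [CompletelyRegularSpace Y]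
    (U : ι → Set Y) (hU : ∀ i, IsOpen (U i)) (a : ι → Y) (ha : ∀ i, a i ∈ U i) (z : Y)
    (hz : ∀ W ∈ 𝓝 z, {i | a i ∈ W}.Infinite)
    (hC : ∀ C : Set Y, IsCompact C → {i | (U i ∩ C).Nonempty}.Finite) : ¬ IsAscoli Y := by
  intro hA
  have hex : ∀ i, ∃ f : C(Y, ℝ), f (a i) = 1 ∧ ∀ y, y ∉ U i → f y = 0 := by
    intro i
    obtain ⟨f, hf, hfa, hf1⟩ := CompletelyRegularSpace.completely_regular (a i) (U i)ᶜ
      (hU i).isClosed_compl (fun h => h (ha i))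
    refine ⟨⟨fun y => 1 - (f y : ℝ), by fun_prop⟩, by simp [hfa], fun y hy => ?_⟩
    have : f y = 1 := hf1 hy
    simp [this]
  choose f hfa hf0 using hex
  have hlim : Tendsto f cofinite (𝓝 (0 : C(Y, ℝ))) := by
    rw [ContinuousMap.tendsto_nhds_compactOpen]
    intro C hCc O hO hmaps
    have := hC C hCc
    rw [Filter.eventually_cofinite]
    refine this.subset fun i hi => ?_
    by_contra hne
    apply hi
    intro y hy
    have : f i y = 0 := hf0 i y fun hyU => hne ⟨y, hyU, hy⟩
    rw [this]
    exact hmaps hy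
  let K : Set C(Y, ℝ) := insert 0 (Set.range f)
  have hK : IsCompact K := by
    have := hlim.isCompact_insert_range_of_cofinite
    exact this
  have hcont := hA K hK
  let z0 : K := ⟨0, Set.mem_insert _ _⟩
  have h1 : ∀ᶠ p : Y × K in 𝓝 (z, z0), (p.2 : C(Y, ℝ)) p.1 < 1 := by
    apply hcont.continuousAt.eventually_lt continuousAt_const
    simp [z0]
  rw [nhds_prod_eq] at h1
  obtain ⟨P, hP, Q, hQ, hPQ⟩ := Filter.eventually_prod_iff.1 h1
  have hlim' : Tendsto (fun i => (⟨f i, Set.mem_insert_of_mem _ ⟨i, rfl⟩⟩ : K)) cofinite (𝓝 z0) :=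
    tendsto_subtype_rng.2 hlim
  have h2 := hlim'.eventually hQ
  rw [Filter.eventually_cofinite] at h2
  obtain ⟨i, hi, hi2⟩ := ((hz _ hP).sdiff h2).nonempty
  have h3 := hPQ hi (not_not.1 hi2)
  simp [hfa] at h3

/-- The point of the Cantor space agreeing with `w` below `n`, followed by `m` ones and zeros. -/
def cpt (n m : ℕ) (w : ℕ → Bool) : ℕ → Bool := fun i => if i < n then w i else decide (i < n + m)

/-- A continuous function counting ones in a window. -/
def ccount (n : ℕ) (w : ℕ → Bool) : ℝ :=
  ∑ i ∈ Finset.range (2 * n + 2), if w (n + i) = true then (1 : ℝ) else 0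

theorem continuous_ccount (n : ℕ) : Continuous (ccount n) := by
  refine continuous_finsetSum _ fun i _ => ?_
  have h : Continuous fun b : Bool => if b = true then (1 : ℝ) else 0 :=
    continuous_of_discreteTopology
  exact h.comp (continuous_apply (n + i))

theorem ccount_cpt (n m : ℕ) (hm : m ≤ 2 * n + 2) (w : ℕ → Bool) :
    ccount n (cpt n m w) = m := by
  unfold ccount cpt
  have : ∀ i ∈ Finset.range (2 * n + 2),
      (if (if n + i < n then w (n + i) else decide (n + i < n + m)) = true then (1 : ℝ) else 0)
      = if i < m then 1 else 0 := by
    intro i _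
    simp
  rw [Finset.sum_congr rfl this, Finset.sum_ite]
  have h2 : (Finset.range (2 * n + 2)).filter (fun i => i < m) = Finset.range m := by
    ext i
    simp
    omega
  simp [h2]

/-- A bump function. -/
noncomputable def psi (t : ℝ) : ℝ := max 0 (1 - 2 * |t|) - max 0 (1 - 2 * |t - 1|)

theorem continuous_psi : Continuous psi := by unfold psi; fun_prop

theorem psi_zero : psi 0 = 1 := by unfold psi; norm_num

theorem psi_one : psi 1 = -1 := by unfold psi; norm_num

theorem psi_supp {t : ℝ} (h : psi t ≠ 0) : -(1 / 2) < t ∧ t < 3 / 2 := by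
  by_contra hc
  apply h
  unfold psi
  have h1 := le_abs_self t
  have h2 := neg_abs_le t
  have h3 := le_abs_self (t - 1)
  have h4 := neg_abs_le (t - 1)
  rw [not_and_or, not_lt, not_lt] at hc
  rw [max_eq_left, max_eq_left, sub_self]
  · rcases hc with hc | hc <;> linarith
  · rcases hc with hc | hc <;> linarith

theorem cantor_open {W : Set (ℕ → Bool)} (hW : IsOpen W) {w : ℕ → Bool} (hw : w ∈ W) :
    ∃ N, ∀ x : ℕ → Bool, (∀ i < N, x i = w i) → x ∈ W := by
  have h1 := hW.mem_nhds hw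
  rw [nhds_pi, Filter.mem_pi'] at h1
  obtain ⟨I, t, ht, hI⟩ := h1
  refine ⟨I.sup id + 1, fun x hx => hI fun i hi => ?_⟩
  rw [hx i (Nat.lt_succ_of_le (Finset.le_sup (f := id) hi))]
  exact mem_of_mem_nhds (ht i)

/-- The open sets. -/
def Uset {X : Type*} [TopologicalSpace X] (φ : (ℕ → Bool) → X) (n j : ℕ) : Set (Cp X) :=
  {f | ∀ w, 1 / 2 < f.1 (φ (cpt n (2 * j) w)) ∧ f.1 (φ (cpt n (2 * j + 1) w)) < -(1 / 2)}

theorem finite_range_cpt (n m : ℕ) : (Set.range (cpt n m)).Finite := by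
  let r : (Fin n → Bool) → (ℕ → Bool) :=
    fun s => cpt n m (fun i => if h : i < n then s ⟨i, h⟩ else false)
  refine (Set.finite_range r).subset ?_
  rintro _ ⟨w, rfl⟩
  refine ⟨fun i => w i, ?_⟩
  funext i
  simp only [r, cpt]
  split_ifs <;> rfl

theorem continuous_Cp_eval {X : Type*} [TopologicalSpace X] (x : X) :
    Continuous fun f : Cp X => f.1 x :=
  (continuous_apply x).comp continuous_subtype_val

theorem isOpen_Uset {X : Type*} [TopologicalSpace X] (φ : (ℕ → Bool) → X) (n j : ℕ) :
    IsOpen (Uset φ n j) := by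
  have : Uset φ n j = (⋂ x ∈ Set.range (cpt n (2 * j)), {f : Cp X | 1 / 2 < f.1 (φ x)}) ∩
      ⋂ x ∈ Set.range (cpt n (2 * j + 1)), {f : Cp X | f.1 (φ x) < -(1 / 2)} := by
    ext f
    simp [Uset, forall_and]
  rw [this]
  exact ((finite_range_cpt _ _).isOpen_biInter fun x _ =>
    isOpen_lt continuous_const (continuous_Cp_eval _)).inter
    ((finite_range_cpt _ _).isOpen_biInter fun x _ =>
    isOpen_lt (continuous_Cp_eval _) continuous_const)

theorem no_compact {X : Type*} [TopologicalSpace X] (φ : (ℕ → Bool) → X) (hφ : Continuous φ)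
    (C : Set (Cp X)) (hC : IsCompact C) (g : ℕ → Cp X) (hgC : ∀ k, g k ∈ C)
    (n j : ℕ → ℕ) (hn : ∀ k, k ≤ n k) (hg : ∀ k, g k ∈ Uset φ (n k) (j k)) : False := by
  let u := TopologicalSpace.denseSeq (ℕ → Bool)
  let ρ : Cp X → (ℕ → ℝ) := fun f i => f.1 (φ (u i))
  have hρ : Continuous ρ := continuous_pi fun i => continuous_Cp_eval _
  obtain ⟨l, -, s, hs, hl⟩ := (hC.image hρ).tendsto_subseq (x := fun k => ρ (g k))
    (fun k => ⟨_, hgC k, rfl⟩)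
  -- cluster points along the subsequence
  have hclus : ∀ (T : Set ℝ), IsClosed T → ∀ x, (∃ᶠ i in atTop, (g (s i)).1 (φ x) ∈ T) →
      ∃ f : Cp X, f.1 (φ x) ∈ T ∧ ∀ i, f.1 (φ (u i)) = l i := by
    intro T hT x hfr
    let L : Filter ℕ := atTop ⊓ 𝓟 {i | (g (s i)).1 (φ x) ∈ T}
    have hL : L.NeBot := Filter.frequently_mem_iff_neBot.1 hfr
    obtain ⟨f, -, hf⟩ := hC.exists_mapClusterPt (f := L) (u := fun i => g (s i))
      (by rw [le_principal_iff, mem_map]; exact Eventually.of_forall fun i => hgC _)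
    refine ⟨f, ?_, fun i => ?_⟩
    · have h1 : MapClusterPt (f.1 (φ x)) L (fun i => (g (s i)).1 (φ x)) :=
        hf.continuousAt_comp (continuous_Cp_eval (φ x)).continuousAt
      have h2 : ∀ᶠ i in L, (g (s i)).1 (φ x) ∈ T :=
        Filter.mem_inf_of_right (mem_principal_self _)
      exact hT.mem_of_mapClusterPt h1 h2
    · have h1 : MapClusterPt (ρ f) L (fun i => ρ (g (s i))) :=
        hf.continuousAt_comp hρ.continuousAt
      have h2 : Tendsto (fun i => ρ (g (s i))) L (𝓝 l) := hl.mono_left inf_le_left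
      have h3 : ρ f = l := by
        have h4 : ClusterPt (ρ f) (𝓝 l) := ClusterPt.mono h1 h2
        exact eq_of_nhds_neBot h4
      exact congrFun h3 i
  have hcg : ∀ i, Continuous fun x => (g (s i)).1 (φ x) := fun i => (g (s i)).2.comp hφ
  let O1 : ℕ → Set (ℕ → Bool) := fun m => ⋃ i ≥ m, {x | 1 / 2 < (g (s i)).1 (φ x)}
  let O2 : ℕ → Set (ℕ → Bool) := fun m => ⋃ i ≥ m, {x | (g (s i)).1 (φ x) < -(1 / 2)}
  have ho1 : ∀ m, IsOpen (O1 m) := fun m =>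
    isOpen_biUnion fun i _ => isOpen_lt continuous_const (hcg i)
  have ho2 : ∀ m, IsOpen (O2 m) := fun m =>
    isOpen_biUnion fun i _ => isOpen_lt (hcg i) continuous_const
  have hcp : ∀ N i k w, N ≤ i → ∀ t < N, cpt (n (s i)) k w t = w t := by
    intro N i k w hNi t ht
    have h1 := hn (s i)
    have h2 := hs.le_apply (x := i)
    have : t < n (s i) := by omega
    simp [cpt, this]
  have hd1 : ∀ m, Dense (O1 m) := by
    intro m
    rw [dense_iff_inter_open]
    rintro W hW ⟨w, hw⟩
    obtain ⟨N, hN⟩ := cantor_open hW hw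
    refine ⟨cpt (n (s (max m N))) (2 * j (s (max m N))) w, hN _ (hcp _ _ _ _ (le_max_right _ _)), ?_⟩
    exact Set.mem_iUnion₂.2 ⟨max m N, le_max_left _ _, (hg _ w).1⟩
  have hd2 : ∀ m, Dense (O2 m) := by
    intro m
    rw [dense_iff_inter_open]
    rintro W hW ⟨w, hw⟩
    obtain ⟨N, hN⟩ := cantor_open hW hw
    refine ⟨cpt (n (s (max m N))) (2 * j (s (max m N)) + 1) w,
      hN _ (hcp _ _ _ _ (le_max_right _ _)), ?_⟩
    exact Set.mem_iUnion₂.2 ⟨max m N, le_max_left _ _, (hg _ w).2⟩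
  have hd := dense_iInter_of_isOpen_nat (f := fun m => O1 m ∩ O2 m)
    (fun m => (ho1 m).inter (ho2 m)) (fun m => (hd1 m).inter_of_isOpen_left (hd2 m) (ho1 m))
  obtain ⟨x, hx⟩ := hd.nonempty
  rw [Set.mem_iInter] at hx
  obtain ⟨f1, hf1, hf1u⟩ := hclus (Set.Ici (1 / 2)) isClosed_Ici x (by
    rw [frequently_atTop]
    intro m
    obtain ⟨i, hi, h⟩ := Set.mem_iUnion₂.1 (hx m).1
    exact ⟨i, hi, Set.mem_Ici.2 (le_of_lt h)⟩)
  obtain ⟨f2, hf2, hf2u⟩ := hclus (Set.Iic (-(1 / 2))) isClosed_Iic x (by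
    rw [frequently_atTop]
    intro m
    obtain ⟨i, hi, h⟩ := Set.mem_iUnion₂.1 (hx m).2
    exact ⟨i, hi, Set.mem_Iic.2 (le_of_lt h)⟩)
  have heq : (fun x => f1.1 (φ x)) = fun x => f2.1 (φ x) := by
    apply Continuous.ext_on (TopologicalSpace.denseRange_denseSeq (ℕ → Bool))
      (f1.2.comp hφ) (f2.2.comp hφ)
    rintro _ ⟨i, rfl⟩
    exact (hf1u i).trans (hf2u i).symm
  have := congrFun heq x
  simp only [Set.mem_Ici, Set.mem_Iic] at hf1 hf2 this
  linarith

theorem not_ascoli {X : Type*} [MetricSpace X] (φ : (ℕ → Bool) → X) (hφ : Continuous φ)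
    (hinj : Function.Injective φ) : ¬ IsAscoli (Cp X) := by
  have hemb : IsClosedEmbedding φ := hφ.isClosedEmbedding hinj
  have hh : ∀ n, ∃ h : C(X, ℝ), ∀ w, h (φ w) = ccount n w := by
    intro n
    obtain ⟨h, hh⟩ := ContinuousMap.exists_extension hemb ⟨ccount n, continuous_ccount n⟩
    exact ⟨h, fun w => DFunLike.congr_fun hh w⟩
  choose h hh using hh
  let a : {p : ℕ × ℕ // p.2 ≤ p.1} → Cp X := fun i =>
    ⟨fun x => psi (h i.1.1 x - 2 * i.1.2), continuous_psi.comp (by fun_prop)⟩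
  refine not_ascoli_of_family (fun i : {p : ℕ × ℕ // p.2 ≤ p.1} => Uset φ i.1.1 i.1.2)
    (fun i => isOpen_Uset _ _ _) a ?_ ⟨fun _ => 0, continuous_const⟩ ?_ ?_
  · rintro ⟨⟨n, j⟩, hj⟩ w
    simp only at hj
    simp only [a]
    rw [hh, hh, ccount_cpt _ _ (by omega), ccount_cpt _ _ (by omega)]
    push_cast
    rw [sub_self, psi_zero, add_sub_cancel_left, psi_one]
    norm_num
  · intro W hW
    rw [nhds_induced, Filter.mem_comap] at hW
    obtain ⟨t, ht, htW⟩ := hW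
    rw [nhds_pi, Filter.mem_pi'] at ht
    obtain ⟨I, s, hs, hI⟩ := ht
    have key : ∀ n, I.card ≤ n → ∃ j ≤ n, ∀ x ∈ I, psi (h n x - 2 * j) = 0 := by
      intro n hn
      by_contra hcon
      push Not at hcon
      have : Nonempty X := ⟨(hcon 0 (Nat.zero_le _)).choose⟩
      choose! p hpI hp using hcon
      have hcard : I.card < (Finset.range (n + 1)).card := by simp; omega
      obtain ⟨i, hi, j, hj, hij, hpij⟩ := Finset.exists_ne_map_eq_of_card_lt_of_maps_to hcard
        (f := p) (fun i hi => hpI i (by simpa [Nat.lt_succ_iff] using hi))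
      have h1 := psi_supp (hp i (by simpa [Nat.lt_succ_iff] using hi))
      have h2 := psi_supp (hp j (by simpa [Nat.lt_succ_iff] using hj))
      rw [hpij] at h1
      rcases lt_or_gt_of_ne hij with hlt | hlt
      · have : (i : ℝ) + 1 ≤ j := by exact_mod_cast hlt
        linarith [h1.2, h2.1]
      · have : (j : ℝ) + 1 ≤ i := by exact_mod_cast hlt
        linarith [h1.1, h2.2]
    intro hfin
    obtain ⟨M, hM⟩ := (hfin.image (fun i => i.1.1)).bddAbove
    obtain ⟨j, hj, hj0⟩ := key (max I.card (M + 1)) (le_max_left _ _)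
    have : max I.card (M + 1) ≤ M := by
      apply hM
      refine ⟨⟨(max I.card (M + 1), j), hj⟩, ?_, rfl⟩
      apply htW
      apply hI
      intro x hx
      simp only [a]
      rw [hj0 x hx]
      exact mem_of_mem_nhds (hs x)
    have := le_max_right I.card (M + 1)
    omega
  · intro C hC
    by_contra hinf
    have hex : ∀ k : ℕ, ∃ i : {p : ℕ × ℕ // p.2 ≤ p.1}, k ≤ i.1.1 ∧ (Uset φ i.1.1 i.1.2 ∩ C).Nonempty := by
      intro k
      by_contra hcon
      push Not at hcon
      apply hinf
      have hf : (Set.Iio k ×ˢ Set.Iio k).Finite := (Set.finite_Iio k).prod (Set.finite_Iio k)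
      refine (hf.preimage (f := (Subtype.val : {p : ℕ × ℕ // p.2 ≤ p.1} → ℕ × ℕ))
        Subtype.val_injective.injOn).subset fun i hi => ?_
      have h1 : i.1.1 < k := by
        by_contra hk
        exact Set.Nonempty.ne_empty hi (hcon i (not_lt.1 hk))
      exact ⟨h1, lt_of_le_of_lt i.2 h1⟩
    choose i hi g hg using hex
    exact no_compact φ hφ C hC g (fun k => (hg k).2) (fun k => (i k).1.1) (fun k => (i k).1.2) hi
      (fun k => (hg k).1)

theorem scattered_iff_ascoli {X : Type*} [MetricSpace X] [CompleteSpace X] :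
    IsScattered X ↔ IsAscoli (Cp X) := by
  constructor
  · intro hs
    exact ascoli_of_kfu fun U hU z hz => Cp_kfu hs hU hz
  · intro hA
    by_contra hs
    unfold IsScattered at hs
    push Not at hs
    obtain ⟨A, hne, hA'⟩ := hs
    have hpre : Preperfect A := by
      intro x hx
      rw [accPt_iff_nhds]
      intro U hU
      by_contra hcon
      push Not at hcon
      obtain ⟨V, hVU, hV, hxV⟩ := mem_nhds_iff.1 hU
      apply hA' x hx V hV
      ext y
      constructor
      · rintro ⟨hy, hyA⟩
        exact hcon y ⟨hVU hy, hyA⟩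
      · rintro rfl
        exact ⟨hxV, hx⟩
    obtain ⟨φ, -, hφ, hinj⟩ := hpre.perfect_closure.exists_nat_bool_injection hne.closure
    exact not_ascoli φ hφ hinj hA

theorem stmt13 {X : Type*} [TopologicalSpace X]
    (hm : CompletelyMetrizable X) : IsScattered X ↔ IsAscoli (Cp X) := by
  obtain ⟨m, rfl, hc⟩ := hm
  exact scattered_iff_ascoli
end

section
/- For a Čech-complete Lindelöf space X, the following are equivalent: (i) C_p(X) is Ascoli; (ii) C_p(X) is Fréchet–Urysohn; (iii) X is scattered; (iv) X is scattered and σ-compact. -/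
open Topology Filter

def CechComplete (X : Type u) [TopologicalSpace X] : Prop :=
  ∃ (Y : Type u) (_ : TopologicalSpace Y) (_ : CompactSpace Y) (_ : T2Space Y)
    (e : X → Y), IsEmbedding e ∧ Dense (Set.range e) ∧ IsGδ (Set.range e)

lemma ideal_univ {X : Type*} [TopologicalSpace X] [RegularSpace X] [LindelofSpace X]
    (hs : IsScattered X) (P : Set X → Prop)
    (mono : ∀ S T : Set X, S ⊆ T → P T → P S)
    (hU : ∀ T : Set (Set X), T.Countable → (∀ S ∈ T, P S) → P (⋃₀ T))
    (hloc : ∀ a, ∃ W : ℕ → Set X, (∀ n, IsOpen (W n)) ∧ (∀ n, a ∈ W n) ∧ P (⋂ n, W n)) :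
    P Set.univ := by
  have cover : ∀ C : Set X, IsClosed C → (∀ x ∈ C, ∃ U ∈ 𝓝 x, P U) → P C := by
    intro C hC h
    choose! U hU1 hU2 using h
    obtain ⟨t, htc, hts, hst⟩ := hC.isLindelof.elim_nhds_subcover U hU1
    refine mono _ _ ?_ (hU (U '' t) (htc.image U) ?_)
    · rw [Set.sUnion_image]; exact hst
    · rintro _ ⟨x, hx, rfl⟩
      exact hU2 x (hts x hx)
  by_contra hne
  have hA : {x : X | ¬ ∃ U ∈ 𝓝 x, P U}.Nonempty := by
    by_contra h
    rw [Set.not_nonempty_iff_eq_empty] at h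
    refine hne (cover _ isClosed_univ fun x _ => ?_)
    by_contra h2
    have : x ∈ {x : X | ¬ ∃ U ∈ 𝓝 x, P U} := h2
    rw [h] at this
    exact this
  obtain ⟨a, ha, U, hUo, hUA⟩ := hs _ hA
  have haU : a ∈ U := by
    have : a ∈ U ∩ {x : X | ¬ ∃ U ∈ 𝓝 x, P U} := by rw [hUA]; rfl
    exact this.1
  obtain ⟨Z, hZ, hZc, hZU⟩ := exists_mem_nhds_isClosed_subset (hUo.mem_nhds haU)
  obtain ⟨W, hWo, haW, hPW⟩ := hloc a
  refine ha ⟨Z, hZ, ?_⟩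
  have hn : ∀ n, P (Z \ W n) := by
    intro n
    refine cover _ (hZc.sdiff (hWo n)) ?_
    rintro x ⟨hxZ, hxW⟩
    by_contra h2
    have : x ∈ U ∩ {x : X | ¬ ∃ U ∈ 𝓝 x, P U} := ⟨hZU hxZ, h2⟩
    rw [hUA] at this
    exact hxW (this ▸ haW n)
  refine mono _ _ ?_ (hU (insert (⋂ n, W n) (Set.range fun n => Z \ W n))
    ((Set.countable_range _).insert _) ?_)
  · intro x hx
    by_cases h : x ∈ ⋂ n, W n
    · exact ⟨_, Set.mem_insert _ _, h⟩
    · rw [Set.mem_iInter] at h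
      push Not at h
      obtain ⟨n, hn⟩ := h
      exact ⟨_, Set.mem_insert_of_mem _ ⟨n, rfl⟩, hx, hn⟩
  · rintro S (rfl | ⟨n, rfl⟩)
    · exact hPW
    · exact hn n

lemma sigmaCompact_of_scattered {X : Type u} [TopologicalSpace X] [T35Space X] [LindelofSpace X]
    (hcc : CechComplete X) (hs : IsScattered X) : SigmaCompactSpace X := by
  obtain ⟨Y, _, _, _, e, he, -, hG⟩ := hcc
  obtain ⟨O, hO, hOe⟩ := hG.eq_iInter_nat
  have := ideal_univ hs (fun S => ∃ S', IsSigmaCompact S' ∧ S ⊆ S') ?_ ?_ ?_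
  · obtain ⟨S', h1, h2⟩ := this
    rw [← isSigmaCompact_univ_iff]
    rwa [Set.univ_subset_iff.1 h2] at h1
  · rintro S T hST ⟨S', h1, h2⟩
    exact ⟨S', h1, hST.trans h2⟩
  · intro T hT h
    choose! f hf1 hf2 using h
    refine ⟨⋃ S ∈ T, f S, isSigmaCompact_biUnion hT hf1, ?_⟩
    rintro x ⟨S, hS, hx⟩
    exact Set.mem_biUnion hS (hf2 S hS hx)
  · intro a
    have ha : ∀ n, e a ∈ O n := by
      have : e a ∈ ⋂ n, O n := hOe ▸ ⟨a, rfl⟩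
      exact Set.mem_iInter.1 this
    have : ∀ n, ∃ Z ∈ 𝓝 (e a), IsClosed Z ∧ Z ⊆ O n := fun n =>
      exists_mem_nhds_isClosed_subset ((hO n).mem_nhds (ha n))
    choose Z hZ hZc hZO using this
    refine ⟨fun n => e ⁻¹' (interior (Z n)), fun n => isOpen_interior.preimage he.continuous,
      fun n => mem_interior_iff_mem_nhds.2 (hZ n), e ⁻¹' (⋂ n, Z n), ?_, ?_⟩
    · apply IsCompact.isSigmaCompact
      refine he.isInducing.isCompact_preimage' (isClosed_iInter hZc).isCompact ?_
      rw [hOe]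
      exact Set.iInter_mono hZO
    · intro x hx
      rw [Set.mem_iInter] at hx
      exact Set.mem_iInter.2 fun n => interior_subset (hx n)

lemma countable_image {X M : Type*} [TopologicalSpace X] [RegularSpace X] [LindelofSpace X]
    [TopologicalSpace M] [FirstCountableTopology M] [T1Space M]
    (hs : IsScattered X) (f : X → M) (hf : Continuous f) : (Set.range f).Countable := by
  have := ideal_univ hs (fun S => (f '' S).Countable) ?_ ?_ ?_
  · rwa [Set.image_univ] at this
  · intro S T hST h
    exact h.mono (Set.image_mono hST)
  · intro T hT h
    rw [Set.sUnion_eq_biUnion, Set.image_iUnion₂]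
    exact hT.biUnion h
  · intro a
    obtain ⟨u, hu⟩ := (𝓝 (f a)).exists_antitone_basis
    refine ⟨fun n => f ⁻¹' (interior (u n)), fun n => isOpen_interior.preimage hf,
      fun n => mem_interior_iff_mem_nhds.2 (hu.1.mem_of_mem trivial), ?_⟩
    refine (Set.countable_singleton (f a)).mono ?_
    rintro _ ⟨x, hx, rfl⟩
    rw [Set.mem_iInter] at hx
    by_contra hne
    have : {f x}ᶜ ∈ 𝓝 (f a) := isOpen_compl_singleton.mem_nhds (fun h => hne h.symm)
    obtain ⟨n, -, hn⟩ := hu.1.mem_iff.1 this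
    exact hn (interior_subset (hx n)) rfl

lemma Cp_tight {X : Type*} [TopologicalSpace X] [SigmaCompactSpace X] (A : Set (Cp X))
    (f : Cp X) (hf : f ∈ closure A) : ∃ B ⊆ A, B.Countable ∧ f ∈ closure B := by
  have key : ∀ n k : ℕ, ∃ B ⊆ A, B.Countable ∧ ∀ x : Fin n → X, ∃ g ∈ B,
      ∀ i, |g.1 (x i) - f.1 (x i)| < 1 / ((k : ℝ) + 1) := by
    intro n k
    have h1 : ∀ x : Fin n → X, ∃ g ∈ A, ∀ i, |g.1 (x i) - f.1 (x i)| < 1 / ((k : ℝ) + 1) := by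
      intro x
      have ho : IsOpen {g : Cp X | ∀ i, |g.1 (x i) - f.1 (x i)| < 1 / ((k : ℝ) + 1)} := by
        have : {g : Cp X | ∀ i, |g.1 (x i) - f.1 (x i)| < 1 / ((k : ℝ) + 1)} =
          ⋂ i, {g : Cp X | |g.1 (x i) - f.1 (x i)| < 1 / ((k : ℝ) + 1)} := by ext; simp
        rw [this]
        refine isOpen_iInter_of_finite fun i => isOpen_lt ?_ continuous_const
        have : Continuous fun g : Cp X => g.1 (x i) :=
          (continuous_apply (x i)).comp continuous_subtype_val
        exact (this.sub continuous_const).abs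
      obtain ⟨g, hg, hgA⟩ := mem_closure_iff.1 hf _ ho (by
        intro i; simp only [sub_self, abs_zero]; positivity)
      exact ⟨g, hgA, hg⟩
    choose g hgA hg using h1
    obtain ⟨t, htc, ht⟩ := LindelofSpace.elim_nhds_subcover
      (fun x : Fin n → X => {y | ∀ i, |(g x).1 (y i) - f.1 (y i)| < 1 / ((k : ℝ) + 1)}) (by
        intro x
        refine IsOpen.mem_nhds ?_ (hg x)
        have : {y : Fin n → X | ∀ i, |(g x).1 (y i) - f.1 (y i)| < 1 / ((k : ℝ) + 1)} =
          ⋂ i, {y | |(g x).1 (y i) - f.1 (y i)| < 1 / ((k : ℝ) + 1)} := by ext; simp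
        rw [this]
        refine isOpen_iInter_of_finite fun i => isOpen_lt ?_ continuous_const
        have h1 := (g x).2
        have h2 := f.2
        fun_prop)
    refine ⟨g '' t, ?_, htc.image g, ?_⟩
    · rintro _ ⟨x, -, rfl⟩; exact hgA x
    · intro y
      have : y ∈ ⋃ x ∈ t, {y | ∀ i, |(g x).1 (y i) - f.1 (y i)| < 1 / ((k : ℝ) + 1)} := by
        rw [ht]; trivial
      simp only [Set.mem_iUnion] at this
      obtain ⟨x, hx, hy⟩ := this
      exact ⟨g x, ⟨x, hx, rfl⟩, hy⟩
  choose B hBA hBc hB using key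
  refine ⟨⋃ n, ⋃ k, B n k, Set.iUnion_subset fun n => Set.iUnion_subset fun k => hBA n k,
    Set.countable_iUnion fun n => Set.countable_iUnion fun k => hBc n k, ?_⟩
  rw [mem_closure_iff_nhds]
  intro V hV
  rw [nhds_subtype_eq_comap, mem_comap] at hV
  obtain ⟨W, hW, hWV⟩ := hV
  rw [nhds_pi, Filter.mem_pi] at hW
  obtain ⟨I, hI, t, ht, htW⟩ := hW
  have : ∀ x, ∃ k : ℕ, Metric.ball (f.1 x) (1 / ((k : ℝ) + 1)) ⊆ t x := fun x => by
    obtain ⟨k, -, hk⟩ := Metric.nhds_basis_ball_inv_nat_succ.mem_iff.1 (ht x)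
    exact ⟨k, hk⟩
  choose k hk using this
  let J := hI.toFinset
  let K := J.sup k
  let eqv := J.equivFin
  obtain ⟨g, hgB, hg⟩ := hB J.card K (fun i => (eqv.symm i : X))
  refine ⟨g, hWV (htW ?_), Set.mem_iUnion.2 ⟨_, Set.mem_iUnion.2 ⟨_, hgB⟩⟩⟩
  intro x hx
  have hxJ : x ∈ J := hI.mem_toFinset.2 hx
  have := hg (eqv ⟨x, hxJ⟩)
  simp only [Equiv.symm_apply_apply] at this
  apply hk x
  rw [Metric.mem_ball, Real.dist_eq]
  refine this.trans_le ?_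
  have : k x ≤ K := Finset.le_sup hxJ
  gcongr

lemma frechet_of_scattered {X : Type*} [TopologicalSpace X] [T35Space X] [SigmaCompactSpace X]
    (hs : IsScattered X) : FrechetUrysohnSpace (Cp X) := by
  refine ⟨fun A f hf => ?_⟩
  obtain ⟨B, hBA, hBc, hfB⟩ := Cp_tight A f hf
  have hBc' : Countable {g : Cp X // g ∈ insert f B} := (hBc.insert f).to_subtype
  let Φ : X → ({g : Cp X // g ∈ insert f B} → ℝ) := fun x g => g.1.1 x
  have hΦ : Continuous Φ := continuous_pi fun g => g.1.2
  have hc := countable_image hs Φ hΦ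
  have : Countable (Set.range Φ) := hc.to_subtype
  choose σ hσ using fun y : Set.range Φ => y.2
  let r : Cp X → (Set.range Φ → ℝ) := fun g y => g.1 (σ y)
  have hr : Continuous r := continuous_pi fun y =>
    (continuous_apply (σ y)).comp continuous_subtype_val
  have h1 : r f ∈ closure (r '' B) := image_closure_subset_closure_image hr ⟨f, hfB, rfl⟩
  obtain ⟨u, huB, hu⟩ := mem_closure_iff_seq_limit.1 h1
  choose g hgB hg using huB
  refine ⟨g, fun n => hBA (hgB n), ?_⟩
  rw [tendsto_subtype_rng, tendsto_pi_nhds]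
  intro x
  have h2 := (tendsto_pi_nhds.1 hu) ⟨Φ x, x, rfl⟩
  have h3 : ∀ h ∈ insert f B, h.1 (σ ⟨Φ x, x, rfl⟩) = h.1 x := by
    intro h hh
    exact congrFun (hσ ⟨Φ x, x, rfl⟩) ⟨h, hh⟩
  have h4 : r f ⟨Φ x, x, rfl⟩ = f.1 x := h3 f (Set.mem_insert _ _)
  rw [h4] at h2
  refine h2.congr fun n => ?_
  rw [← hg n]
  exact h3 _ (Set.mem_insert_of_mem _ (hgB n))

lemma ascoli_of_frechet {Y : Type*} [TopologicalSpace Y] [T2Space Y] [FrechetUrysohnSpace Y] :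
    IsAscoli Y := by
  intro K hK
  have hKc : CompactSpace K := isCompact_iff_compactSpace.1 hK
  have equi : ∀ y0 : Y, ∀ ε > 0, ∀ᶠ y in 𝓝 y0, ∀ f ∈ K, |f y - f y0| < ε := by
    intro y0 ε hε
    by_contra hcon
    have hcl : y0 ∈ closure {y | ¬ ∀ f ∈ K, |f y - f y0| < ε} :=
      mem_closure_iff_frequently.2 (Filter.not_eventually.1 hcon)
    obtain ⟨u, huA, hu⟩ := mem_closure_iff_seq_limit.1 hcl
    let C : Set Y := insert y0 (Set.range u)
    have hC : IsCompact C := hu.isCompact_insert_range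
    have : CompactSpace C := isCompact_iff_compactSpace.1 hC
    have hcont : Continuous fun p : C × K => |(p.2 : C(Y, ℝ)) p.1 - (p.2 : C(Y, ℝ)) y0| := by
      have h1 : Continuous fun p : C × K => ((p.2 : C(Y, ℝ)).restrict C) p.1 :=
        ContinuousEval.continuous_eval.comp
          (((ContinuousMap.continuous_restrict C).comp
            (continuous_subtype_val.comp continuous_snd)).prodMk continuous_fst)
      have h2 : Continuous fun p : C × K => (p.2 : C(Y, ℝ)) y0 :=
        (ContinuousEvalConst.continuous_eval_const y0).comp
          (continuous_subtype_val.comp continuous_snd)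
      exact (h1.sub h2).abs
    have hopen : IsOpen {p : C × K | |(p.2 : C(Y, ℝ)) p.1 - (p.2 : C(Y, ℝ)) y0| < ε} :=
      isOpen_lt hcont continuous_const
    let c0 : C := ⟨y0, Set.mem_insert _ _⟩
    have hev : ∀ᶠ c : C in 𝓝 c0, ∀ f ∈ (Set.univ : Set K),
        |(f : C(Y, ℝ)) c - (f : C(Y, ℝ)) y0| < ε := by
      refine (isCompact_univ (X := K)).eventually_forall_of_forall_eventually ?_
      intro f _
      exact hopen.mem_nhds (by simpa [c0] using hε)
    have hu' : Tendsto (fun n => (⟨u n, Set.mem_insert_of_mem _ ⟨n, rfl⟩⟩ : C)) atTop (𝓝 c0) := by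
      rw [tendsto_subtype_rng]; exact hu
    obtain ⟨n, hn⟩ := (hu'.eventually hev).exists
    exact huA n fun f hf => hn ⟨f, hf⟩ trivial
  rw [continuous_iff_continuousAt]
  rintro ⟨y0, f0⟩
  rw [ContinuousAt, Metric.tendsto_nhds]
  intro ε hε
  have h2 : Continuous fun f : K => (f : C(Y, ℝ)) y0 :=
    (ContinuousEvalConst.continuous_eval_const y0).comp continuous_subtype_val
  have h3 : ∀ᶠ f : K in 𝓝 f0, dist ((f : C(Y, ℝ)) y0) ((f0 : C(Y, ℝ)) y0) < ε / 2 :=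
    Metric.tendsto_nhds.1 h2.continuousAt _ (half_pos hε)
  filter_upwards [(equi y0 _ (half_pos hε)).prod_nhds h3] with p hp
  have := hp.1 p.2 p.2.2
  calc dist ((p.2 : C(Y, ℝ)) p.1) ((f0 : C(Y, ℝ)) y0)
      ≤ dist ((p.2 : C(Y, ℝ)) p.1) ((p.2 : C(Y, ℝ)) y0)
        + dist ((p.2 : C(Y, ℝ)) y0) ((f0 : C(Y, ℝ)) y0) := dist_triangle _ _ _
    _ < ε / 2 + ε / 2 := add_lt_add (by rwa [Real.dist_eq]) hp.2
    _ = ε := add_halves ε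

lemma cantor_step {Y : Type*} [TopologicalSpace Y] [CompactSpace Y] [T2Space Y] (B : Set Y)
    (hB : ∀ a ∈ B, ∀ U : Set Y, IsOpen U → U ∩ B ≠ {a}) (O : Set Y) (hO : IsOpen O) (hBO : B ⊆ O)
    (V : {V : Set Y // IsOpen V ∧ (V ∩ B).Nonempty}) :
    ∃ W : Bool → {V : Set Y // IsOpen V ∧ (V ∩ B).Nonempty},
      (∀ b, closure (W b).1 ⊆ V.1 ∩ O) ∧ Disjoint (closure (W false).1) (closure (W true).1) := by
  obtain ⟨V, hV, a, haV, haB⟩ := V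
  obtain ⟨b, hb, hba⟩ : ∃ b ∈ V ∩ B, b ≠ a := by
    by_contra h
    push Not at h
    exact hB a haB V hV (Set.Subset.antisymm (fun x hx => h x hx)
      (Set.singleton_subset_iff.2 ⟨haV, haB⟩))
  obtain ⟨S, hS, T, hT, hST⟩ :
      ∃ S ∈ 𝓝 b, ∃ T ∈ 𝓝 a, Disjoint S T := by
    obtain ⟨S, T, hS, hT, h1, h2, h3⟩ := t2_separation hba
    exact ⟨S, hS.mem_nhds h1, T, hT.mem_nhds h2, h3⟩
  obtain ⟨S', hS', hSc, hSs⟩ := exists_mem_nhds_isClosed_subset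
    (inter_mem hS ((hV.inter hO).mem_nhds ⟨hb.1, hBO hb.2⟩))
  obtain ⟨T', hT', hTc, hTs⟩ := exists_mem_nhds_isClosed_subset
    (inter_mem hT ((hV.inter hO).mem_nhds ⟨haV, hBO haB⟩))
  have cS : closure (interior S') ⊆ S' := closure_minimal interior_subset hSc
  have cT : closure (interior T') ⊆ T' := closure_minimal interior_subset hTc
  refine ⟨fun i => bif i then ⟨interior S', isOpen_interior, b, mem_interior_iff_mem_nhds.2 hS', hb.2⟩
    else ⟨interior T', isOpen_interior, a, mem_interior_iff_mem_nhds.2 hT', haB⟩, ?_, ?_⟩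
  · rintro (_ | _)
    · exact fun x hx => (hTs (cT hx)).2
    · exact fun x hx => (hSs (cS hx)).2
  · refine Set.disjoint_left.2 fun x h1 h2 => ?_
    exact Set.disjoint_left.1 hST (hSs (cS h2)).1 (hTs (cT h1)).1

/-- The branch of a Cantor scheme. -/
def cbranch {S : Type*} (W : ℕ → S → Bool → S) (s0 : S) (x : ℕ → Bool) : ℕ → S
  | 0 => s0
  | n + 1 => W n (cbranch W s0 x n) (x n)

lemma cbranch_congr {S : Type*} (W : ℕ → S → Bool → S) (s0 : S) (x y : ℕ → Bool) (n : ℕ)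
    (h : ∀ k < n, x k = y k) : cbranch W s0 x n = cbranch W s0 y n := by
  induction n with
  | zero => rfl
  | succ n ih =>
    simp only [cbranch]
    rw [ih fun k hk => h k (by omega), h n (by omega)]

lemma exists_cantor {X : Type u} [TopologicalSpace X] (hcc : CechComplete X)
    (hns : ¬ IsScattered X) :
    ∃ (L : Type u) (_ : TopologicalSpace L) (_ : CompactSpace L) (_ : T2Space L)
      (p : L → X) (q : L → (ℕ → Bool)), Continuous p ∧ Function.Injective p ∧ Continuous q ∧
      Function.Surjective q := by
  obtain ⟨Y, _, _, _, e, he, -, hG⟩ := hcc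
  obtain ⟨O, hO, hOe⟩ := hG.eq_iInter_nat
  unfold IsScattered at hns
  push Not at hns
  obtain ⟨A, hA, hAi⟩ := hns
  have hB : ∀ a ∈ e '' A, ∀ U : Set Y, IsOpen U → U ∩ e '' A ≠ {a} := by
    rintro _ ⟨a, ha, rfl⟩ U hU h
    refine hAi a ha (e ⁻¹' U) (hU.preimage he.continuous) ?_
    ext x
    constructor
    · rintro ⟨h1, h2⟩
      have : e x ∈ U ∩ e '' A := ⟨h1, x, h2, rfl⟩
      rw [h] at this
      exact he.injective this
    · rintro rfl
      have : e x ∈ U ∩ e '' A := by rw [h]; rfl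
      exact ⟨this.1, ha⟩
  have hBO : ∀ n, e '' A ⊆ O n := by
    rintro n _ ⟨a, -, rfl⟩
    have : e a ∈ ⋂ n, O n := hOe ▸ ⟨a, rfl⟩
    exact Set.mem_iInter.1 this n
  choose W hW hWd using fun n => cantor_step (e '' A) hB (O n) (hO n) (hBO n)
  let s0 : {V : Set Y // IsOpen V ∧ (V ∩ e '' A).Nonempty} :=
    ⟨Set.univ, isOpen_univ, by simpa using hA⟩
  let V := cbranch W s0
  have hVs : ∀ x n, closure (V x (n + 1)).1 ⊆ (V x n).1 ∩ O n := fun x n => hW n _ _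
  let L : Set (Y × (ℕ → Bool)) := {z | ∀ n, z.1 ∈ closure (V z.2 n).1}
  have hL : IsClosed L := by
    have : L = ⋂ n, {z | z.1 ∈ closure (V z.2 n).1} := by ext; simp [L]
    rw [this]
    refine isClosed_iInter fun n => ?_
    rw [← isOpen_compl_iff, isOpen_iff_eventually]
    intro z hz
    have h1 : ∀ᶠ y in 𝓝 z.1, y ∉ closure (V z.2 n).1 :=
      isClosed_closure.isOpen_compl.mem_nhds hz
    have h2 : ∀ᶠ x in 𝓝 z.2, ∀ k ∈ Set.Iio n, x k = z.2 k := by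
      rw [Filter.eventually_all_finite (Set.finite_Iio n)]
      intro k _
      have : Continuous fun x : ℕ → Bool => x k := continuous_apply k
      exact this.continuousAt.eventually (show ∀ᶠ b in 𝓝 (z.2 k), b = z.2 k by simp)
    filter_upwards [h1.prod_nhds h2] with w hw
    have : V w.2 n = V z.2 n := cbranch_congr _ _ _ _ _ hw.2
    show ¬ (w.1 ∈ closure (V w.2 n).1)
    rw [this]
    exact hw.1
  have hmem : ∀ z : L, ∃ a, e a = z.1.1 := by
    intro z
    have : z.1.1 ∈ Set.range e := by
      rw [hOe]
      exact Set.mem_iInter.2 fun n => (hVs _ n (z.2 (n + 1))).2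
    exact this
  choose p hp using hmem
  refine ⟨L, inferInstance, isCompact_iff_compactSpace.1 hL.isCompact, inferInstance, p,
    fun z => z.1.2, ?_, ?_, continuous_snd.comp continuous_subtype_val, ?_⟩
  · rw [he.continuous_iff]
    have : e ∘ p = fun z => z.1.1 := funext hp
    rw [this]
    exact continuous_fst.comp continuous_subtype_val
  · intro z w h
    have h1 : z.1.1 = w.1.1 := by rw [← hp, ← hp, h]
    have h2 : ∀ n, z.1.2 n = w.1.2 n := by
      intro n
      induction n using Nat.strong_induction_on with
      | _ n ih =>
        have hV : V z.1.2 n = V w.1.2 n := cbranch_congr _ _ _ _ _ ih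
        have hz : z.1.1 ∈ closure (W n (V z.1.2 n) (z.1.2 n)).1 := z.2 (n + 1)
        have hw : w.1.1 ∈ closure (W n (V w.1.2 n) (w.1.2 n)).1 := w.2 (n + 1)
        rw [← h1, ← hV] at hw
        have hd := Set.disjoint_left.1 (hWd n (V z.1.2 n))
        cases hzn : z.1.2 n <;> cases hwn : w.1.2 n <;> rw [hzn] at hz <;> rw [hwn] at hw
        · exact (hd hz hw).elim
        · exact (hd hw hz).elim
    exact Subtype.ext (Prod.ext h1 (funext h2))
  · intro x
    obtain ⟨y, hy⟩ := IsCompact.nonempty_iInter_of_sequence_nonempty_isCompact_isClosed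
      (fun n => closure (V x n).1)
      (fun n => ((hVs x n).trans Set.inter_subset_left).trans subset_closure)
      (fun n => ((V x n).2.2.mono Set.inter_subset_left).mono subset_closure)
      isClosed_closure.isCompact (fun n => isClosed_closure)
    exact ⟨⟨(y, x), fun n => Set.mem_iInter.1 hy n⟩, rfl⟩

lemma point_finite {X : Type*} [TopologicalSpace X] [T35Space X] [LindelofSpace X]
    (h : IsAscoli (Cp X)) (F : ℕ → Finset X)
    (hF : ∀ E : Finset X, ∀ᶠ n in atTop, Disjoint (F n) E) :
    ∃ (U : ℕ → Set X), (∀ n, IsOpen (U n)) ∧ (∃ᶠ n in atTop, (F n : Set X) ⊆ U n) ∧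
      ∀ x, ∀ᶠ n in atTop, (F n : Set X) ⊆ U n → x ∉ U n := by
  by_cases hcf : ∀ C : Set (Cp X), IsCompact C →
      ∀ᶠ n : ℕ in atTop, ∀ g ∈ C, ∃ x ∈ F n, g.1 x ≤ n
  · exfalso
    let φ : ℕ → C(Cp X, ℝ) := fun n =>
      ⟨fun g => ∏ x ∈ F n, min 1 (max 0 (g.1 x - n)), by
        refine continuous_finsetProd _ fun x _ => ?_
        have : Continuous fun g : Cp X => g.1 x :=
          (continuous_apply x).comp continuous_subtype_val
        exact continuous_const.min (continuous_const.max (this.sub continuous_const))⟩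
    have hφ : Tendsto φ atTop (𝓝 0) := by
      rw [ContinuousMap.tendsto_nhds_compactOpen]
      intro C hC U hU hCU
      filter_upwards [hcf C hC] with n hn g hg
      obtain ⟨x, hx, hxn⟩ := hn g hg
      have : φ n g = 0 := Finset.prod_eq_zero hx (by
        rw [max_eq_left (by linarith)]; simp)
      rw [this]
      exact hCU hg
    have hK := hφ.isCompact_insert_range
    have hcont := h _ hK
    let k0 : (insert 0 (Set.range φ) : Set C(Cp X, ℝ)) := ⟨0, Set.mem_insert _ _⟩
    let k : ℕ → (insert 0 (Set.range φ) : Set C(Cp X, ℝ)) :=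
      fun n => ⟨φ n, Set.mem_insert_of_mem _ ⟨n, rfl⟩⟩
    have hk : Tendsto k atTop (𝓝 k0) := by rw [tendsto_subtype_rng]; exact hφ
    let g0 : Cp X := ⟨fun _ => 0, continuous_const⟩
    have hev := hcont.continuousAt (x := (g0, k0)) |>.eventually
      (show ∀ᶠ r in 𝓝 ((k0 : C(Cp X, ℝ)) g0), r < 1 from
        gt_mem_nhds (show (0 : ℝ) < 1 from one_pos))
    rw [nhds_prod_eq] at hev
    obtain ⟨P, hP, Q, hQ, hPQ⟩ := Filter.eventually_prod_iff.1 hev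
    have hP' : {g | P g} ∈ 𝓝 g0 := hP
    rw [nhds_subtype_eq_comap, mem_comap] at hP'
    obtain ⟨T, hT, hTP⟩ := hP'
    rw [nhds_pi, Filter.mem_pi] at hT
    obtain ⟨I, hI, t, ht, htW⟩ := hT
    obtain ⟨n, hn1, hn2⟩ := ((hk.eventually hQ).and (hF hI.toFinset)).exists
    obtain ⟨f, hf0, hf1, -⟩ := exists_continuous_zero_one_of_isClosed
      (hI.isClosed) ((F n).finite_toSet.isClosed)
      (Set.disjoint_left.2 fun x hx hx' =>
        Finset.disjoint_left.1 hn2 hx' (hI.mem_toFinset.2 hx))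
    let g : Cp X := ⟨fun x => (n + 1) * f x, continuous_const.mul f.continuous⟩
    have hg : P g := by
      apply hTP
      apply htW
      intro x hx
      have : g.1 x = 0 := by simp [g, hf0 hx]
      rw [this]
      exact mem_of_mem_nhds (ht x)
    have := hPQ hg hn1
    have h1 : φ n g = 1 := by
      refine Finset.prod_eq_one fun x hx => ?_
      have : g.1 x = n + 1 := by simp [g, hf1 hx]
      rw [this]
      simp
    change φ n g < 1 at this
    linarith
  · push Not at hcf
    obtain ⟨C, hC, hfr⟩ := hcf
    have hfr' : ∃ᶠ n : ℕ in atTop, ∃ g ∈ C, ∀ x ∈ F n, (n : ℝ) < g.1 x := by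
      simpa [Filter.Frequently] using hfr
    classical
    let g : ℕ → Cp X := fun n =>
      if hn : ∃ g ∈ C, ∀ x ∈ F n, (n : ℝ) < g.1 x then hn.choose else ⟨fun _ => 0, continuous_const⟩
    have hg : ∀ n, (∃ g ∈ C, ∀ x ∈ F n, (n : ℝ) < g.1 x) →
        g n ∈ C ∧ ∀ x ∈ F n, (n : ℝ) < (g n).1 x := by
      intro n hn
      simp only [g, dif_pos hn]
      exact hn.choose_spec
    have hg' : ∀ n, g n ∈ C ∨ g n = ⟨fun _ => 0, continuous_const⟩ := by
      intro n
      by_cases hn : ∃ g ∈ C, ∀ x ∈ F n, (n : ℝ) < g.1 x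
      · exact Or.inl (hg n hn).1
      · right; simp only [g, dif_neg hn]
    refine ⟨fun n => {x | (n : ℝ) < (g n).1 x}, fun n => isOpen_lt continuous_const (g n).2,
      hfr'.mono fun n hn x hx => (hg n hn).2 x hx, ?_⟩
    intro x
    have hx : Continuous fun g : Cp X => g.1 x :=
      (continuous_apply x).comp continuous_subtype_val
    obtain ⟨M, hM⟩ := (hC.image hx).bddAbove
    obtain ⟨N, hN⟩ := exists_nat_ge (max M 0)
    filter_upwards [eventually_ge_atTop N] with n hn _ hlt
    have hlt' : (n : ℝ) < (g n).1 x := hlt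
    have hle : (g n).1 x ≤ max M 0 := by
      rcases hg' n with h1 | h1
      · exact (hM ⟨g n, h1, rfl⟩).trans (le_max_left _ _)
      · rw [h1]; exact le_max_right _ _
    have : (N : ℝ) ≤ n := by exact_mod_cast hn
    linarith

/-- A finite set of points of the Cantor space at level `n`. -/
def dpt (n : ℕ) (t : Fin n → Bool) : ℕ → Bool :=
  fun k => if h : k < n then t ⟨k, h⟩ else decide (k = n)

lemma dpt_inj {m n : ℕ} {s : Fin m → Bool} {t : Fin n → Bool} (h : dpt m s = dpt n t) : m = n := by
  by_contra hne
  rcases lt_or_gt_of_ne hne with hlt | hlt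
  · have h1 := congrFun h n
    have h2 : ¬ n < m := by omega
    have h3 : n ≠ m := by omega
    simp [dpt, h2, h3] at h1
  · have h1 := congrFun h m
    have h2 : ¬ m < n := by omega
    have h3 : m ≠ n := by omega
    simp [dpt, h2, h3] at h1

lemma dpt_tendsto (x : ℕ → Bool) :
    Tendsto (fun n => dpt n (fun i => x i)) atTop (𝓝 x) := by
  rw [tendsto_pi_nhds]
  intro k
  refine tendsto_const_nhds.congr' ?_
  filter_upwards [eventually_gt_atTop k] with n hn
  simp [dpt, hn]

lemma exists_irreducible {L : Type u} {Q : Type} [TopologicalSpace L] [CompactSpace L]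
    [TopologicalSpace Q] [T1Space Q] {q : L → Q} (hq : Continuous q) (hqs : Function.Surjective q) :
    ∃ E : Set L, CompactSpace E ∧ q '' E = Set.univ ∧
      ∀ E₀ : Set E, E₀ ≠ Set.univ → IsClosed E₀ → E.domRestrict q '' E₀ ≠ Set.univ := by
  have hT : T1Space (ULift.{u} Q) := Topology.IsEmbedding.uliftDown.t1Space
  obtain ⟨E, hEc, hE, hmin⟩ := exists_compact_surjective_zorn_subset
    (X := fun z => ULift.up.{u} (q z)) (continuous_uliftUp.comp hq)
    (fun x => (hqs x.down).imp fun z hz => congrArg ULift.up hz)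
  refine ⟨E, hEc, ?_, ?_⟩
  · rw [Set.eq_univ_iff_forall] at hE ⊢
    intro x
    obtain ⟨z, hz, hzx⟩ := hE ⟨x⟩
    exact ⟨z, hz, congrArg ULift.down hzx⟩
  · intro E₀ h1 h2 h3
    refine hmin E₀ h1 h2 ?_
    rw [Set.eq_univ_iff_forall] at h3 ⊢
    intro x
    obtain ⟨z, hz, hzx⟩ := h3 x.down
    exact ⟨z, hz, congrArg ULift.up hzx⟩

lemma scattered_of_ascoli {X : Type u} [TopologicalSpace X] [T35Space X] [LindelofSpace X]
    (hcc : CechComplete X) (h : IsAscoli (Cp X)) : IsScattered X := by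
  by_contra hns
  obtain ⟨L, _, _, _, p, q, hp, hpi, hq, hqs⟩ := exists_cantor hcc hns
  obtain ⟨E, hEc, hE, hmin⟩ := exists_irreducible hq hqs
  have hsec : ∀ x, ∃ z : E, q z = x := by
    intro x
    have : x ∈ q '' E := by rw [hE]; trivial
    obtain ⟨z, hz, rfl⟩ := this
    exact ⟨⟨z, hz⟩, rfl⟩
  choose σ hσ using hsec
  classical
  let F : ℕ → Finset X := fun n => Finset.univ.image fun t => p (σ (dpt n t))
  have hFmem : ∀ n x, x ∈ F n ↔ ∃ t, p (σ (dpt n t)) = x := by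
    intro n x; simp [F]
  have hF : ∀ E : Finset X, ∀ᶠ n in atTop, Disjoint (F n) E := by
    intro E
    have h1 : ∀ x ∈ E, ∀ᶠ n in atTop, x ∉ F n := by
      intro x _
      rw [← Nat.cofinite_eq_atTop, Filter.eventually_cofinite]
      refine Set.Subsingleton.finite ?_
      intro m hm n hn
      simp only [Set.mem_ofPred_eq, not_not] at hm hn
      obtain ⟨s, hs⟩ := (hFmem _ _).1 hm
      obtain ⟨t, ht⟩ := (hFmem _ _).1 hn
      have := Subtype.ext (hpi (hs.trans ht.symm))
      have h2 : dpt m s = dpt n t := by rw [← hσ (dpt m s), ← hσ (dpt n t), this]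
      exact dpt_inj h2
    have h2 := (Filter.eventually_all_finset E).2 h1
    filter_upwards [h2] with n hn
    exact Finset.disjoint_left.2 fun x hx hx' => hn x hx' hx
  obtain ⟨U, hUo, hUf, hUp⟩ := point_finite h F hF
  let r : E → X := fun z => p z
  have hr : Continuous r := hp.comp continuous_subtype_val
  let D : ℕ → Set E := fun m => ⋃ n ∈ {n | m ≤ n ∧ (F n : Set X) ⊆ U n}, r ⁻¹' (U n)
  have hDo : ∀ m, IsOpen (D m) := fun m =>
    isOpen_biUnion fun n _ => (hUo n).preimage hr
  have hDd : ∀ m, Dense (D m) := by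
    intro m
    have hcl : closure (D m) = Set.univ := by
      by_contra hne
      refine hmin _ hne isClosed_closure ?_
      rw [Set.eq_univ_iff_forall]
      intro x
      have hclosed : IsClosed (E.domRestrict q '' closure (D m)) :=
        (isClosed_closure.isCompact.image hq.continuousOn.domRestrict).isClosed
      rw [← hclosed.closure_eq]
      refine mem_closure_of_frequently_of_tendsto ?_ (dpt_tendsto x)
      refine (hUf.and_eventually (eventually_ge_atTop m)).mono ?_
      rintro n ⟨hn, hmn⟩
      refine ⟨σ (dpt n fun i => x i), subset_closure ?_, hσ _⟩
      exact Set.mem_biUnion (show n ∈ {n | m ≤ n ∧ (F n : Set X) ⊆ U n} from ⟨hmn, hn⟩)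
        (hn ((hFmem _ _).2 ⟨_, rfl⟩))
    exact dense_iff_closure_eq.2 hcl
  have : Nonempty E := ⟨σ fun _ => true⟩
  obtain ⟨z, hz⟩ := (dense_iInter_of_isOpen_nat hDo hDd).nonempty
  obtain ⟨N, hN⟩ := eventually_atTop.1 (hUp (r z))
  have hzN := Set.mem_iInter.1 hz N
  simp only [D, Set.mem_iUnion] at hzN
  obtain ⟨n, ⟨hn1, hn2⟩, hn3⟩ := hzN
  exact hN n hn1 hn2 hn3

theorem stmt14 {X : Type u} [TopologicalSpace X] [T35Space X] [LindelofSpace X]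
    (hcc : CechComplete X) :
    List.TFAE
      [IsAscoli (Cp X),
       FrechetUrysohnSpace (Cp X),
       IsScattered X,
       IsScattered X ∧ SigmaCompactSpace X] := by
  tfae_have 1 → 3 := scattered_of_ascoli hcc
  tfae_have 3 → 4 := fun h => ⟨h, sigmaCompact_of_scattered hcc h⟩
  tfae_have 4 → 2 := fun h => by
    have := h.2
    exact frechet_of_scattered h.1
  tfae_have 2 → 1 := fun h => ascoli_of_frechet
  tfae_finish
end
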